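/- Let 0 < α < 1 and 0 < β < 1 and let n be a natural number. Then the 2×2 real matrix [[c₁(n), 1], [1, c₄(n)]], where c₁(n) = −Γ(α+1)Γ(−β)/(Γ(α−n)Γ(n−β+1)) and c₄(n) = β·Γ(1−α)Γ(β)/(α·Γ(n−α+1)Γ(β−n)), has rank exactly 1. (This is the rank-one property of the matrix-valued point masses μ{λₙ} established in Theorem 4.3, expressing that each eigenvalue of the unperturbed operator A₀ has multiplicity one.) -/

import Mathlib

/-! The matrix is nonzero, so it has rank one exactly when its determinant `c₁(z) c₄(z) - 1`
vanishes. Pairing the Gamma factors of `c₁(z)` with those of `c₄(z)`, the reflection formula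
`Γ(s) Γ(1 - s) = π / sin (π s)` turns the product `c₁(z) c₄(z)` into
`sin (π (α - z)) sin (π (β - z)) / (sin (π α) sin (π β))`. At an integer `z = n` each sine in the
numerator is `(-1)ⁿ` times the corresponding one in the denominator, and the two signs cancel. -/

lemma matrix_rank_eq_zero_iff {R m n : Type*} [CommRing R] [IsDomain R] [Finite m] [Fintype n]
    (A : Matrix m n R) : A.rank = 0 ↔ A = 0 := by
  classical
  rw [Matrix.rank, Submodule.finrank_eq_zero, LinearMap.range_eq_bot, ← Matrix.toLin'_apply',
    LinearEquiv.map_eq_zero_iff]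

section Rank

variable {K : Type*} [Field K]

lemma matrix_rank_lt_card_iff_det_eq_zero {n : Type*} [Fintype n] [DecidableEq n]
    (A : Matrix n n K) : A.rank < Fintype.card n ↔ A.det = 0 := by
  refine ⟨fun hrank => ?_, fun hdet => ?_⟩
  · by_contra hdet
    exact hrank.ne (Matrix.rank_of_det_ne_zero hdet)
  · obtain ⟨v, hv, hAv⟩ := Matrix.exists_mulVec_eq_zero_iff.mpr hdet
    have hker : 1 ≤ Module.finrank K A.mulVecLin.ker :=
      Submodule.one_le_finrank_iff.mpr ((Submodule.ne_bot_iff _).mpr ⟨v, hAv, hv⟩)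
    have hsum : A.rank + Module.finrank K A.mulVecLin.ker = Fintype.card n :=
      A.mulVecLin.finrank_range_add_finrank_ker.trans (Module.finrank_fintype_fun_eq_card K)
    lia

lemma matrix_fin_two_rank_eq_one_iff (A : Matrix (Fin 2) (Fin 2) K) :
    A.rank = 1 ↔ A ≠ 0 ∧ A.det = 0 := by
  rw [← matrix_rank_lt_card_iff_det_eq_zero, Fintype.card_fin, ne_eq,
    ← matrix_rank_eq_zero_iff A]
  lia

lemma matrix_fin_two_rank_map_eq_one_iff {L : Type*} [Field L] (f : K →+* L)
    (A : Matrix (Fin 2) (Fin 2) K) : (A.map f).rank = 1 ↔ A.rank = 1 := by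
  have hzero : A.map f = 0 ↔ A = 0 :=
    (Matrix.map_injective f.injective).eq_iff' (Matrix.map_zero f (map_zero f))
  have hdet : (A.map f).det = f A.det := (f.map_det A).symm
  rw [matrix_fin_two_rank_eq_one_iff, matrix_fin_two_rank_eq_one_iff, hdet,
    map_eq_zero, ne_eq, hzero]

end Rank

lemma matrix_fin_two_map {X Y : Type*} (f : X → Y) (a b c d : X) :
    !![a, b; c, d].map f = !![f a, f b; f c, f d] := by
  ext i j
  fin_cases i <;> fin_cases j <;> rfl

open Complex
open scoped Real

lemma ofReal_mem_integerComplement_of_pos_of_lt_one {x : ℝ} (h₀ : 0 < x) (h₁ : x < 1) :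
    (x : ℂ) ∈ integerComplement := by
  rintro ⟨m, hm⟩
  have hx : (m : ℝ) = x := mod_cast hm
  rw [← hx] at h₀ h₁
  norm_cast at h₀ h₁
  lia

lemma sin_pi_mul_sub_intCast (s : ℂ) (n : ℤ) :
    sin (π * (s - n)) = (-1) ^ n * sin (π * s) := by
  rw [mul_sub, mul_comm _ (n : ℂ), sin_antiperiodic.sub_int_mul_eq, Int.cast_negOnePow]

/-- The function `c₁`, with its dependence on `α` and `β` made explicit and all three arguments
complex; it is the upper diagonal entry of the point mass matrix. -/
noncomputable def pointMassC₁ (α β z : ℂ) : ℂ :=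
  -Gamma (α + 1) * Gamma (-β) / (Gamma (α - z) * Gamma (z - β + 1))

/-- The function `c₄`, with its dependence on `α` and `β` made explicit and all three arguments
complex; it is the lower diagonal entry of the point mass matrix. -/
noncomputable def pointMassC₄ (α β z : ℂ) : ℂ :=
  β * Gamma (1 - α) * Gamma β / (α * Gamma (z - α + 1) * Gamma (β - z))

lemma pointMassC₁_mul_pointMassC₄ {α β : ℂ} (hα : α ≠ 0) (hβ : β ≠ 0) (z : ℂ) :
    pointMassC₁ α β z * pointMassC₄ α β z =
      sin (π * (α - z)) * sin (π * (β - z)) / (sin (π * α) * sin (π * β)) := by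
  have hα_succ : Gamma (α + 1) = α * Gamma α := Gamma_add_one α hα
  have hβ_succ : Gamma (1 - β) = -β * Gamma (-β) := by
    rw [← Gamma_add_one (-β) (neg_ne_zero.mpr hβ), neg_add_eq_sub]
  have hsub_add (s : ℂ) : z - s + 1 = 1 - (s - z) := by ring
  have hπ : (π : ℂ) ≠ 0 := ofReal_ne_zero.mpr Real.pi_ne_zero
  calc pointMassC₁ α β z * pointMassC₄ α β z
    _ = (α * ((Gamma α * Gamma (1 - α)) * (Gamma β * Gamma (1 - β)))) /
        (α * ((Gamma (α - z) * Gamma (1 - (α - z))) * (Gamma (β - z) * Gamma (1 - (β - z))))) := by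
      rw [pointMassC₁, pointMassC₄, div_mul_div_comm, hα_succ, hβ_succ, hsub_add, hsub_add]
      ring
    -- Where `sin (π s) = 0`, one of `Gamma s` and `Gamma (1 - s)` is evaluated at a pole, so both
    -- sides of the reflection formula take the value `0`.
    _ = ((π / sin (π * α)) * (π / sin (π * β))) /
        ((π / sin (π * (α - z))) * (π / sin (π * (β - z)))) := by
      simp only [mul_div_mul_left _ _ hα, Gamma_mul_Gamma_one_sub]
    _ = _ := by field_simp

lemma pointMassC₁_mul_pointMassC₄_intCast {α β : ℂ} (hα : α ∈ integerComplement)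
    (hβ : β ∈ integerComplement) (n : ℤ) :
    pointMassC₁ α β n * pointMassC₄ α β n = 1 := by
  have hsin : sin (π * α) * sin (π * β) ≠ 0 :=
    mul_ne_zero (sin_pi_mul_ne_zero hα) (sin_pi_mul_ne_zero hβ)
  have hsign : ((-1) ^ n * (-1) ^ n : ℂ) = 1 := by
    rw [← mul_zpow, neg_one_mul, neg_neg, one_zpow]
  rw [pointMassC₁_mul_pointMassC₄ (integerComplement.ne_zero hα) (integerComplement.ne_zero hβ),
    sin_pi_mul_sub_intCast, sin_pi_mul_sub_intCast, mul_mul_mul_comm, hsign, one_mul, div_self hsin]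

theorem point_mass_matrix_rank_one_general {α β : ℂ} (hα : α ∈ integerComplement)
    (hβ : β ∈ integerComplement) (n : ℤ) :
    (!![pointMassC₁ α β n, 1; 1, pointMassC₄ α β n] : Matrix (Fin 2) (Fin 2) ℂ).rank = 1 := by
  rw [matrix_fin_two_rank_eq_one_iff]
  refine ⟨fun hzero => one_ne_zero (congrFun₂ hzero 0 1), ?_⟩
  rw [Matrix.det_fin_two_of, pointMassC₁_mul_pointMassC₄_intCast hα hβ, one_mul, sub_self]

theorem point_mass_matrix_rank_one (α β : ℝ) (hα0 : 0 < α) (hα1 : α < 1)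
    (hβ0 : 0 < β) (hβ1 : β < 1) (n : ℕ)
    (c₁ c₄ : ℝ)
    (hc₁ : c₁ = -Real.Gamma (α + 1) * Real.Gamma (-β) /
        (Real.Gamma (α - n) * Real.Gamma (n - β + 1)))
    (hc₄ : c₄ = β * Real.Gamma (1 - α) * Real.Gamma β /
        (α * Real.Gamma (n - α + 1) * Real.Gamma (β - n))) :
    (!![c₁, 1; 1, c₄] : Matrix (Fin 2) (Fin 2) ℝ).rank = 1 := by
  rw [← matrix_fin_two_rank_map_eq_one_iff ofRealHom, matrix_fin_two_map]
  simpa [hc₁, hc₄, pointMassC₁, pointMassC₄, ← Gamma_ofReal] using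
    point_mass_matrix_rank_one_general
      (ofReal_mem_integerComplement_of_pos_of_lt_one hα0 hα1)
      (ofReal_mem_integerComplement_of_pos_of_lt_one hβ0 hβ1) n
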